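/- Let F be a finite simple graph with at least one edge, let r ≥ 2 be an integer, and let d > 0 be a real number. Suppose Builder has a winning strategy in the deterministic F-avoidance game with r colors and density restriction d. Then for every function N : ℕ → ℕ with n^{2−1/d} = o(N(n)) and N(n) ≤ n(n−1)/2 for all n, and for every sequence of online Painter strategies with r colors (one strategy for each board size n), the probability that the board G_{N(n)} of the online F-avoidance game with r colors on n vertices contains a monochromatic copy of F tends to 1 as n → ∞. -/

import Mathlib

open SimpleGraph Filter Asymptotics
open scoped Classical

/-- A history of the game: the sequence of edges presented so far, together with
the colors (elements of `Fin r`, representing the colors `1,…,r`) they received. -/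
abbrev EdgeHistory (V : Type) (r : ℕ) := List (Sym2 V × Fin r)

/-- A Painter strategy on vertex type `V` with `r` colors: a function assigning a color
to every pair (history, new edge). -/
abbrev PainterStrategy (V : Type) (r : ℕ) := EdgeHistory V r → Sym2 V → Fin r

/-- Auxiliary function: run a Painter strategy on a list of presented edges,
extending the given history. -/
def runPainterAux {V : Type} {r : ℕ} (π : PainterStrategy V r) :
    EdgeHistory V r → List (Sym2 V) → EdgeHistory V r
  | h, [] => h
  | h, e :: es => runPainterAux π (h ++ [(e, π h e)]) es

/-- The colored history obtained by coloring the edges of `l` successively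
according to the Painter strategy `π`. -/
def runPainter {V : Type} {r : ℕ} (π : PainterStrategy V r) (l : List (Sym2 V)) :
    EdgeHistory V r :=
  runPainterAux π [] l

/-- `G` contains a copy of `F`, i.e. a subgraph isomorphic to `F`. -/
def IsCopy {α β : Type} (F : SimpleGraph α) (G : SimpleGraph β) : Prop :=
  ∃ f : α ↪ β, ∀ u v : α, F.Adj u v → G.Adj (f u) (f v)

/-- The graph formed by the edges of color `c` in the history `h`. -/
def colorGraph {V : Type} {r : ℕ} (h : EdgeHistory V r) (c : Fin r) : SimpleGraph V :=
  SimpleGraph.fromEdgeSet {e | (e, c) ∈ h}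

/-- The history `h` contains a monochromatic copy of `F`. -/
def HasMonoCopy {α V : Type} {r : ℕ} (F : SimpleGraph α) (h : EdgeHistory V r) : Prop :=
  ∃ c : Fin r, IsCopy F (colorGraph h c)

/-- The number of edges of `G` lying entirely within the vertex set `S`. -/
noncomputable def edgesWithin {V : Type} (G : SimpleGraph V) (S : Set V) : ℕ :=
  (G.edgeSet ∩ {e | ∀ v ∈ e, v ∈ S}).ncard

/-- `m(G) ≤ d`: every subgraph `H` of `G` with at least one vertex satisfies `e_H ≤ d · v_H`. -/
def DensityLE {V : Type} (G : SimpleGraph V) (d : ℝ) : Prop :=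
  ∀ S : Finset V, S.Nonempty → (edgesWithin G (↑S : Set V) : ℝ) ≤ d * (S.card : ℝ)

/-- `G` contains no cycle and every connected component of `G` has at most `k` edges
(equivalently, `G` is acyclic and contains no connected subgraph with more than `k` edges). -/
def TreeSizeLE {V : Type} (G : SimpleGraph V) (k : ℕ) : Prop :=
  G.IsAcyclic ∧ ∀ S : Set V, (G.induce S).Connected → edgesWithin G S ≤ k

/-- A legal sequence of moves for Builder: distinct non-loop edges. -/
def ValidEdgeSeq {V : Type} (l : List (Sym2 V)) : Prop :=
  l.Nodup ∧ ∀ e ∈ l, ¬ e.IsDiag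

/-- The (uncolored) board formed by a list of edges. -/
def boardOf {V : Type} (l : List (Sym2 V)) : SimpleGraph V :=
  SimpleGraph.fromEdgeSet {e | e ∈ l}

/-- Builder has a winning strategy in the deterministic `F`-avoidance game with `r` colors
and density restriction `d`. -/
def BuilderWinsDensity {α : Type} (F : SimpleGraph α) (r : ℕ) (d : ℝ) : Prop :=
  ∃ a : ℕ, ∀ π : PainterStrategy (Fin a) r, ∃ l : List (Sym2 (Fin a)),
    ValidEdgeSeq l ∧ (∀ i : ℕ, DensityLE (boardOf (l.take i)) d) ∧
    HasMonoCopy F (runPainter π l)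

/-- Builder has a winning strategy in the deterministic `F`-avoidance game with `r` colors
and tree size restriction `k`. -/
def BuilderWinsTree {α : Type} (F : SimpleGraph α) (r k : ℕ) : Prop :=
  ∃ a : ℕ, ∀ π : PainterStrategy (Fin a) r, ∃ l : List (Sym2 (Fin a)),
    ValidEdgeSeq l ∧ (∀ i : ℕ, TreeSizeLE (boardOf (l.take i)) k) ∧
    HasMonoCopy F (runPainter π l)

/-- The Painter strategy `π` on `a` vertices never creates a monochromatic copy of `F`
against any Builder play obeying the tree size restriction `k`. -/
def PainterAvoidsTree {α : Type} (F : SimpleGraph α) (r k a : ℕ)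
    (π : PainterStrategy (Fin a) r) : Prop :=
  ∀ l : List (Sym2 (Fin a)), ValidEdgeSeq l →
    (∀ i : ℕ, TreeSizeLE (boardOf (l.take i)) k) →
    ¬ HasMonoCopy F (runPainter π l)

/-- Painter has a winning strategy in the deterministic `F`-avoidance game with `r` colors
and tree size restriction `k`. -/
def PainterWinsTree {α : Type} (F : SimpleGraph α) (r k : ℕ) : Prop :=
  ∀ a : ℕ, ∃ π : PainterStrategy (Fin a) r, PainterAvoidsTree F r k a π

/-- A sequence of `N` distinct non-loop edges on `n` vertices. -/
def ValidSeqFun {n N : ℕ} (f : Fin N → Sym2 (Fin n)) : Prop :=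
  Function.Injective f ∧ ∀ i, ¬ (f i).IsDiag

/-- The probability (with respect to the uniformly random order in which the `N` distinct
edges of the random process on `n` vertices appear) of the event `P`. -/
noncomputable def onlineProb (n N : ℕ) (P : (Fin N → Sym2 (Fin n)) → Prop) : ℝ :=
  (Set.ncard {f : Fin N → Sym2 (Fin n) | ValidSeqFun f ∧ P f} : ℝ) /
  (Set.ncard {f : Fin N → Sym2 (Fin n) | ValidSeqFun f} : ℝ)

/-- Event: playing the online strategy `π` on the random edge sequence `f` produces
a monochromatic copy of `F`. -/
def OnlineMonoCopy {α : Type} (F : SimpleGraph α) {r n N : ℕ}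
    (π : PainterStrategy (Fin n) r) (f : Fin N → Sym2 (Fin n)) : Prop :=
  HasMonoCopy F (runPainter π (List.ofFn f))

/-!
Cut the random process into a constant number of blocks of `m` steps each, and let the edges be
drawn with replacement: ignoring repeated draws, the board then only lags behind the true one.
A fixed edge is drawn about `p = m / (n choose 2)` times per block, and `n ^ (2 - 1 / d) = o(m)`
says exactly that `n * p ^ d → ∞`.

Builder's strategy lives on a constant number `a` of vertices, and it is simulated on all
embeddings of these `a` vertices at once. Call a colored sequence of `k` presented edges popular
if order `n ^ a * p ^ k` embeddings receive its edges in blocks `0, …, k - 1` with the prescribed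
colors. If a popular sequence is continued by a legal move `e`, then about a fraction `p` of its
embeddings receive `e` in the next block, and one of the `r` colors inherits at least a fraction
`1 / r` of them, so some coloring of `e` is again popular. Against the Painter who chooses these
popular colors, Builder enforces a monochromatic copy of `F`.

That the fraction is close to `p` follows from the second moment method: two embeddings which
agree on `t` of the presented edges share at least `t / d` vertices, because the board of the
small game has density at most `d`, and so this event contributes at most `1 / (n * p ^ d)`
relative to the squared mean. There are only finitely many legal moves, so a union bound finishes.
-/

open scoped BigOperators

section Averages

variable {ι κ E : Type*} [Fintype ι] [Fintype E]

lemma expect_fin_succ (t : ℕ) (G : (Fin (t + 1) → E) → ℝ) :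
    𝔼 s, G s = 𝔼 e, 𝔼 s : Fin t → E, G (Fin.cons e s) := by
  rw [← Finset.expect_product', Finset.univ_product_univ]
  exact (Fintype.expect_equiv (Fin.consEquiv fun _ => E) _ _ fun _ => rfl).symm

lemma sum_fin_succ (t : ℕ) (G : (Fin (t + 1) → E) → ℝ) :
    ∑ s, G s = ∑ e, ∑ s : Fin t → E, G (Fin.cons e s) := by
  rw [← Fintype.sum_prod_type']
  exact (Fintype.sum_equiv (Fin.consEquiv fun _ => E) _ _ fun _ => rfl).symm

lemma expect_expect_update [DecidableEq ι] [Nonempty E] (k : ι) (G : (ι → E) → ℝ) :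
    𝔼 f, 𝔼 y, G (Function.update f k y) = 𝔼 f, G f := by
  have swap : Function.Involutive
      fun q : (ι → E) × E => (Function.update q.1 k q.2, q.1 k) := fun q => by simp
  calc 𝔼 f, 𝔼 y, G (Function.update f k y)
      = 𝔼 q : (ι → E) × E, G (Function.update q.1 k q.2) := by
        rw [← Finset.univ_product_univ, Finset.expect_product]
    _ = 𝔼 q : (ι → E) × E, G q.1 :=
        Fintype.expect_equiv swap.toPerm _ _ fun _ => rfl
    _ = 𝔼 f, G f := by
        rw [← Finset.univ_product_univ, Finset.expect_product]
        simp only [Fintype.expect_const]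

lemma expect_prod_apply [DecidableEq ι] [Nonempty E] (s : Finset ι) (g : ι → E → ℝ) :
    𝔼 f : ι → E, ∏ j ∈ s, g j (f j) = ∏ j ∈ s, 𝔼 y, g j y := by
  have univ_case (g : ι → E → ℝ) : 𝔼 f : ι → E, ∏ j, g j (f j) = ∏ j, 𝔼 y, g j y := by
    simp only [Fintype.expect_eq_sum_div_card, Finset.prod_div_distrib, Finset.prod_univ_sum,
      Fintype.piFinset_univ, Fintype.card_pi, Nat.cast_prod]
  calc 𝔼 f : ι → E, ∏ j ∈ s, g j (f j)
      = 𝔼 f : ι → E, ∏ j, if j ∈ s then g j (f j) else 1 := by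
        simp only [Finset.prod_ite_mem, Finset.univ_inter]
    _ = ∏ j, 𝔼 y, if j ∈ s then g j y else 1 := univ_case fun j y => if j ∈ s then g j y else 1
    _ = ∏ j, if j ∈ s then 𝔼 y, g j y else 1 := Finset.prod_congr rfl fun j _ => by
        split_ifs
        · rfl
        · exact Fintype.expect_const (1 : ℝ)
    _ = ∏ j ∈ s, 𝔼 y, g j y := by rw [Finset.prod_ite_mem, Finset.univ_inter]

/- Chebyshev's inequality combined with a union bound. -/
lemma one_sub_sum_expect_sq_div_le [Nonempty E] (S : Finset κ) (Z : κ → E → ℝ) {t : κ → ℝ}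
    (ht : ∀ x ∈ S, 0 < t x) {P : E → Prop} (hP : ∀ ω, (∀ x ∈ S, |Z x ω| ≤ t x) → P ω) :
    1 - ∑ x ∈ S, (𝔼 ω, Z x ω ^ 2) / t x ^ 2 ≤ 𝔼 ω, if P ω then (1 : ℝ) else 0 := by
  calc 1 - ∑ x ∈ S, (𝔼 ω, Z x ω ^ 2) / t x ^ 2
      = 𝔼 ω, (1 - ∑ x ∈ S, Z x ω ^ 2 / t x ^ 2) := by
        rw [Finset.expect_sub_distrib, Fintype.expect_const, Finset.expect_sum_comm]
        simp only [Finset.expect_div]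
    _ ≤ 𝔼 ω, if P ω then (1 : ℝ) else 0 := Finset.expect_le_expect fun ω _ => ?_
  have terms_nonneg : ∀ x ∈ S, 0 ≤ Z x ω ^ 2 / t x ^ 2 := fun x _ => by positivity
  split_ifs with hω
  · exact sub_le_self _ (Finset.sum_nonneg terms_nonneg)
  · obtain ⟨x, hx, large⟩ : ∃ x ∈ S, t x < |Z x ω| := by
      contrapose! hω
      exact hP ω hω
    have one_le : 1 ≤ Z x ω ^ 2 / t x ^ 2 := by
      rw [one_le_div (pow_pos (ht x hx) 2), ← sq_abs (Z x ω)]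
      exact pow_le_pow_left₀ (ht x hx).le large.le 2
    linarith [Finset.single_le_sum terms_nonneg hx]

end Averages

section DrawingWithReplacement

variable {E : Type*}

/-- Appends the elements of `l` to `g` one by one, skipping those that have already appeared:
the board obtained from `g` when the edges of `l` are drawn with replacement. -/
noncomputable def extendDistinct (g l : List E) : List E :=
  l.foldl (fun g e => if e ∈ g then g else g ++ [e]) g

lemma extendDistinct_cons (g l : List E) (e : E) :
    extendDistinct g (e :: l) = extendDistinct (if e ∈ g then g else g ++ [e]) l := rfl

lemma extendDistinct_append (g l l' : List E) :
    extendDistinct g (l ++ l') = extendDistinct (extendDistinct g l) l' :=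
  List.foldl_append

lemma prefix_extendDistinct (g l : List E) : g <+: extendDistinct g l := by
  induction l generalizing g with
  | nil => exact List.prefix_rfl
  | cons e l ih =>
    rw [extendDistinct_cons]
    refine List.IsPrefix.trans ?_ (ih _)
    split_ifs
    · exact List.prefix_rfl
    · exact List.prefix_append _ _

lemma mem_extendDistinct {g l : List E} {x : E} : x ∈ extendDistinct g l ↔ x ∈ g ∨ x ∈ l := by
  induction l generalizing g with
  | nil => simp [extendDistinct]
  | cons e l ih =>
    rw [extendDistinct_cons, ih]
    split_ifs with he
    · grind
    · grind

variable [Fintype E]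

/-- The expected value of `Φ` after `t` independent uniform draws from `E`, starting from the
list `g` and discarding repeated draws. -/
noncomputable def drawAverage (Φ : List E → ℝ) (t : ℕ) (g : List E) : ℝ :=
  𝔼 s : Fin t → E, Φ (extendDistinct g (List.ofFn s))

variable {Φ : List E → ℝ}

lemma drawAverage_zero (g : List E) : drawAverage Φ 0 g = Φ g := by
  simp [drawAverage, extendDistinct]

lemma drawAverage_mul (K m : ℕ) :
    drawAverage Φ (K * m) [] = 𝔼 f : Fin K → Fin m → E,
      Φ (extendDistinct [] (List.ofFn fun i => List.ofFn (f i)).flatten) := by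
  let blocks : (Fin (K * m) → E) ≃ (Fin K → Fin m → E) :=
    ((Equiv.arrowCongr finProdFinEquiv (Equiv.refl E)).symm.trans (Equiv.curry _ _ _))
  refine Fintype.expect_equiv blocks _ _ fun s => ?_
  have blocks_apply (i : Fin K) (j : Fin m) (hij : (i : ℕ) * m + j < K * m) :
      s ⟨i * m + j, hij⟩ = blocks s i j := by
    refine congrArg s (Fin.ext ?_)
    simp only [finProdFinEquiv_apply_val]
    ring
  rw [List.ofFn_mul]
  simp only [blocks_apply]

lemma drawAverage_succ (t : ℕ) (g : List E) :
    drawAverage Φ (t + 1) g = 𝔼 e, drawAverage Φ t (if e ∈ g then g else g ++ [e]) := by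
  simp only [drawAverage, expect_fin_succ, List.ofFn_cons, extendDistinct_cons]

lemma drawAverage_mono [Nonempty E] (hΦ : ∀ g e, Φ g ≤ Φ (g ++ [e])) (g : List E) :
    Monotone fun t => drawAverage Φ t g := by
  refine monotone_nat_of_le_succ fun t => ?_
  induction t generalizing g with
  | zero =>
    simp only [drawAverage_succ, drawAverage_zero]
    refine (Fintype.expect_const (ι := E) (Φ g)).ge.trans (Finset.expect_le_expect fun e _ => ?_)
    split_ifs
    · exact le_rfl
    · exact hΦ g e
  | succ t ih =>
    rw [drawAverage_succ, drawAverage_succ (t + 1)]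
    exact Finset.expect_le_expect fun e _ => ih _

/- A repeated draw wastes a step, so conditioning the first draw to be new only helps. -/
lemma sub_mul_drawAverage_succ_le [Nonempty E] (hΦ : ∀ g e, Φ g ≤ Φ (g ++ [e])) (t : ℕ)
    {g : List E} (hg : g.Nodup) :
    ((Fintype.card E : ℝ) - g.length) * drawAverage Φ (t + 1) g ≤
      ∑ e with e ∉ g, drawAverage Φ t (g ++ [e]) := by
  have card_old : (({e | e ∈ g} : Finset E).card : ℝ) = g.length := by
    rw [← List.toFinset_card_of_nodup hg]
    congr 2
    ext
    simp
  have split_first_draw : (Fintype.card E : ℝ) * drawAverage Φ (t + 1) g =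
      g.length * drawAverage Φ t g + ∑ e with e ∉ g, drawAverage Φ t (g ++ [e]) := by
    rw [drawAverage_succ, Fintype.card_mul_expect,
      ← Finset.sum_filter_add_sum_filter_not _ (· ∈ g)]
    congr 1
    · rw [← card_old, ← nsmul_eq_mul, ← Finset.sum_const]
      exact Finset.sum_congr rfl fun e he => by rw [if_pos (Finset.mem_filter.1 he).2]
    · exact Finset.sum_congr rfl fun e he => by rw [if_neg (Finset.mem_filter.1 he).2]
  have more_draws : g.length * drawAverage Φ t g ≤ g.length * drawAverage Φ (t + 1) g :=
    mul_le_mul_of_nonneg_left (drawAverage_mono hΦ g t.le_succ) (Nat.cast_nonneg _)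
  linarith

lemma drawAverage_mul_descFactorial_le [Nonempty E] (hΦ : ∀ g e, Φ g ≤ Φ (g ++ [e])) {t : ℕ}
    {g : List E} (hg : g.Nodup) (ht : g.length + t ≤ Fintype.card E) :
    drawAverage Φ t g * ((Fintype.card E - g.length).descFactorial t : ℝ) ≤
      ∑ s : Fin t → E, if (g ++ List.ofFn s).Nodup then Φ (g ++ List.ofFn s) else 0 := by
  induction t generalizing g with
  | zero => simp [drawAverage_zero, hg]
  | succ t ih =>
    obtain ⟨D, hD⟩ : ∃ D, Fintype.card E - g.length = D + 1 :=
      ⟨Fintype.card E - g.length - 1, by omega⟩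
    have hD_real : (Fintype.card E : ℝ) - g.length = D + 1 := by
      rw [← Nat.cast_sub (by omega), hD, Nat.cast_succ]
    calc drawAverage Φ (t + 1) g * ((Fintype.card E - g.length).descFactorial (t + 1) : ℝ)
        = ((Fintype.card E : ℝ) - g.length) * drawAverage Φ (t + 1) g * D.descFactorial t := by
          rw [hD, Nat.succ_descFactorial_succ, hD_real]
          push_cast
          ring
      _ ≤ (∑ e with e ∉ g, drawAverage Φ t (g ++ [e])) * D.descFactorial t := by
          gcongr
          exact sub_mul_drawAverage_succ_le hΦ t hg
      _ ≤ ∑ e with e ∉ g, ∑ s : Fin t → E,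
            if (g ++ [e] ++ List.ofFn s).Nodup then Φ (g ++ [e] ++ List.ofFn s) else 0 := by
          rw [Finset.sum_mul]
          refine Finset.sum_le_sum fun e he => ?_
          have he : e ∉ g := (Finset.mem_filter.1 he).2
          have ih := ih (show (g ++ [e]).Nodup by grind) (by grind)
          rwa [show Fintype.card E - (g ++ [e]).length = D by grind] at ih
      _ = ∑ e, ∑ s : Fin t → E,
            if (g ++ [e] ++ List.ofFn s).Nodup then Φ (g ++ [e] ++ List.ofFn s) else 0 := by
          refine Finset.sum_filter_of_ne fun e _ ne_zero he => ne_zero ?_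
          exact Finset.sum_eq_zero fun s _ => if_neg (by grind)
      _ = _ := by
          rw [sum_fin_succ]
          simp only [List.ofFn_cons, List.append_assoc, List.singleton_append]

end DrawingWithReplacement

section HitCounts

variable {E : Type*} {m : ℕ}

/-- The number of draws in the block `y` that hit `x`. -/
noncomputable def hitCount (y : Fin m → E) (x : E) : ℝ := ∑ i, if y i = x then 1 else 0

lemma hitCount_nonneg (y : Fin m → E) (x : E) : 0 ≤ hitCount y x :=
  Finset.sum_nonneg fun _ _ => by split_ifs <;> norm_num

lemma hitCount_cons (e : E) (y : Fin m → E) (x : E) :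
    hitCount (Fin.cons e y : Fin (m + 1) → E) x = (if e = x then 1 else 0) + hitCount y x := by
  simp only [hitCount, Fin.sum_univ_succ, Fin.cons_zero, Fin.cons_succ]

variable [Fintype E]

lemma expect_indicator_eq (x : E) :
    𝔼 e : E, (if e = x then (1 : ℝ) else 0) = 1 / Fintype.card E := by
  simp

variable [Nonempty E]

lemma expect_hitCount (m : ℕ) (x : E) :
    𝔼 y : Fin m → E, hitCount y x = m / Fintype.card E := by
  induction m with
  | zero => simp [hitCount]
  | succ m ih =>
    simp only [expect_fin_succ, hitCount_cons, Finset.expect_add_distrib, ih,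
      Fintype.expect_const, expect_indicator_eq]
    push_cast
    ring

lemma expect_hitCount_mul_hitCount (m : ℕ) (x x' : E) :
    𝔼 y : Fin m → E, hitCount y x * hitCount y x' =
      (m : ℝ) * (m - 1) / (Fintype.card E : ℝ) ^ 2 +
        m / Fintype.card E * (if x = x' then 1 else 0) := by
  have card_ne_zero : (Fintype.card E : ℝ) ≠ 0 := by exact_mod_cast Fintype.card_ne_zero
  have one_draw : 𝔼 e : E, (if e = x then (1 : ℝ) else 0) * (if e = x' then (1 : ℝ) else 0) =
      1 / Fintype.card E * (if x = x' then 1 else 0) := by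
    rw [Fintype.expect_eq_sum_div_card]
    by_cases hx : x = x'
    · simp [hx]
    · simp [hx, Ne.symm hx]
  induction m with
  | zero => simp [hitCount]
  | succ m ih =>
    simp only [expect_fin_succ, hitCount_cons, add_mul, mul_add, Finset.expect_add_distrib, ih,
      Fintype.expect_const, ← Finset.expect_mul, ← Finset.mul_expect, expect_indicator_eq,
      expect_hitCount, one_draw]
    push_cast
    field_simp
    ring

variable {p : ℝ}

lemma expect_hitCount_mul_hitCount_le (hp : p = m / Fintype.card E) (x x' : E) :
    𝔼 y : Fin m → E, hitCount y x * hitCount y x' ≤ p ^ 2 + p * (if x = x' then 1 else 0) := by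
  rw [expect_hitCount_mul_hitCount, hp, div_pow]
  gcongr
  nlinarith [(Nat.cast_nonneg m : (0 : ℝ) ≤ m)]

lemma expect_hitCount_covariance_le (hp : p = m / Fintype.card E) (x x' : E) :
    𝔼 y : Fin m → E, (hitCount y x - p) * (hitCount y x' - p) ≤
      p * (if x = x' then 1 else 0) := by
  have expand (y : Fin m → E) : (hitCount y x - p) * (hitCount y x' - p) =
      hitCount y x * hitCount y x' - p * hitCount y x - p * hitCount y x' + p ^ 2 := by ring
  simp only [expand, Finset.expect_add_distrib, Finset.expect_sub_distrib, ← Finset.mul_expect,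
    expect_hitCount, Fintype.expect_const, ← hp]
  linarith [expect_hitCount_mul_hitCount_le hp x x']

variable {κ : Type*} [Fintype κ]

lemma expect_sq_weighted_hitCount_sub_le (hp : p = m / Fintype.card E) {w : κ → ℝ}
    (hw : ∀ φ, 0 ≤ w φ) (x : κ → E) :
    𝔼 y : Fin m → E, (∑ φ, w φ * (hitCount y (x φ) - p)) ^ 2 ≤
      ∑ φ, ∑ ψ, w φ * w ψ * (p * (if x φ = x ψ then 1 else 0)) := by
  simp only [sq, Finset.sum_mul_sum, Finset.expect_sum_comm, mul_mul_mul_comm (w _) _ (w _) _,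
    ← Finset.mul_expect]
  gcongr with φ _ ψ _
  · exact mul_nonneg (hw φ) (hw ψ)
  · exact expect_hitCount_covariance_le hp _ _

variable {ι : Type*} [Fintype ι] [DecidableEq ι]

lemma expect_mul_le_prod_of_le_prod_hitCount (hp : p = m / Fintype.card E) (s : Finset ι)
    (x x' : ι → E) {u v : (ι → Fin m → E) → ℝ} (hv : ∀ f, 0 ≤ v f)
    (hux : ∀ f, u f ≤ ∏ j ∈ s, hitCount (f j) (x j))
    (hvx' : ∀ f, v f ≤ ∏ j ∈ s, hitCount (f j) (x' j)) :
    𝔼 f, u f * v f ≤ ∏ j ∈ s, (p ^ 2 + p * (if x j = x' j then 1 else 0)) :=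
  calc 𝔼 f, u f * v f
      ≤ 𝔼 f : ι → Fin m → E, ∏ j ∈ s, hitCount (f j) (x j) * hitCount (f j) (x' j) := by
        refine Finset.expect_le_expect fun f _ => ?_
        rw [Finset.prod_mul_distrib]
        exact mul_le_mul (hux f) (hvx' f) (hv f)
          (Finset.prod_nonneg fun _ _ => hitCount_nonneg _ _)
    _ = ∏ j ∈ s, 𝔼 y : Fin m → E, hitCount y (x j) * hitCount y (x' j) :=
        expect_prod_apply s fun j y => hitCount y (x j) * hitCount y (x' j)
    _ ≤ ∏ j ∈ s, (p ^ 2 + p * (if x j = x' j then 1 else 0)) :=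
        Finset.prod_le_prod
          (fun _ _ => Finset.expect_nonneg fun _ _ =>
            mul_nonneg (hitCount_nonneg _ _) (hitCount_nonneg _ _))
          fun _ _ => expect_hitCount_mul_hitCount_le hp _ _

/- The weights do not depend on block `k`, so the draws of that block may be averaged first. -/
lemma expect_sq_extension_sub_le (hp : p = m / Fintype.card E) (s : Finset ι) (k : ι)
    (x : ι → κ → E) {w : (ι → Fin m → E) → κ → ℝ} (hw : ∀ f φ, 0 ≤ w f φ)
    (hws : ∀ f φ, w f φ ≤ ∏ j ∈ s, hitCount (f j) (x j φ))
    (hwk : ∀ f φ y, w (Function.update f k y) φ = w f φ) :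
    𝔼 f, (∑ φ, w f φ * hitCount (f k) (x k φ) - p * ∑ φ, w f φ) ^ 2 ≤
      ∑ φ, ∑ ψ, (∏ j ∈ s, (p ^ 2 + p * (if x j φ = x j ψ then 1 else 0))) *
        (p * (if x k φ = x k ψ then 1 else 0)) := by
  have p_nonneg : 0 ≤ p := by rw [hp]; positivity
  have collect (f : ι → Fin m → E) :
      ∑ φ, w f φ * hitCount (f k) (x k φ) - p * ∑ φ, w f φ =
        ∑ φ, w f φ * (hitCount (f k) (x k φ) - p) := by
    rw [Finset.mul_sum, ← Finset.sum_sub_distrib]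
    exact Finset.sum_congr rfl fun _ _ => by ring
  simp only [collect]
  rw [← expect_expect_update k]
  simp only [hwk, Function.update_self]
  calc 𝔼 f : ι → Fin m → E, 𝔼 y : Fin m → E, (∑ φ, w f φ * (hitCount y (x k φ) - p)) ^ 2
      ≤ 𝔼 f, ∑ φ, ∑ ψ, w f φ * w f ψ * (p * (if x k φ = x k ψ then 1 else 0)) :=
        Finset.expect_le_expect fun f _ =>
          expect_sq_weighted_hitCount_sub_le hp (hw f) (x k)
    _ = ∑ φ, ∑ ψ, (𝔼 f, w f φ * w f ψ) * (p * (if x k φ = x k ψ then 1 else 0)) := by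
        simp only [Finset.expect_sum_comm, ← Finset.expect_mul]
    _ ≤ _ := by
        gcongr with φ _ ψ _
        exact expect_mul_le_prod_of_le_prod_hitCount hp s (x · φ) (x · ψ)
          (fun f => hw f ψ) (fun f => hws f φ) fun f => hws f ψ

end HitCounts

section OverlappingCopies

/-- The edges a player can present on the vertex set `V`: the vertex pairs without loops. -/
abbrev Edge (V : Type*) := {e : Sym2 V // ¬ e.IsDiag}

variable {A V : Type*}

/- Declared once so that `Edge V` has the same enumeration for `V = Fin n` as for a general `V`,
whose decidable equality is the classical one. -/
noncomputable instance [Fintype V] : Fintype (Edge V) := Fintype.ofFinite _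

lemma card_edge (V : Type*) [Fintype V] :
    Fintype.card (Edge V) = (Fintype.card V).choose 2 := by
  convert Sym2.card_subtype_not_diag (α := V)

/-- The image of an edge under an injection of the vertices. -/
def edgeImage (φ : A ↪ V) (e : Edge A) : Edge V :=
  ⟨e.1.map φ, by rw [Sym2.isDiag_map φ.injective]; exact e.2⟩

lemma apply_mem_range_of_edgeImage_eq {φ ψ : A ↪ V} {e : Edge A}
    (h : edgeImage φ e = edgeImage ψ e) {u : A} (hu : u ∈ e.1) : ψ u ∈ Set.range φ := by
  have hmap : e.1.map φ = e.1.map ψ := congrArg Subtype.val h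
  have hψu : ψ u ∈ e.1.map φ := hmap ▸ Sym2.mem_map.2 ⟨u, hu, rfl⟩
  obtain ⟨u', -, hu'⟩ := Sym2.mem_map.1 hψu
  exact ⟨u', hu'⟩

variable [Fintype A]

/-- The vertices that are mapped by `ψ` into the image of `φ`. -/
noncomputable def overlap (φ ψ : A ↪ V) : Finset A := {u | ψ u ∈ Set.range φ}

/-- The vertices covered by a set of edges. -/
noncomputable def coveredVertices (T : Finset (Edge A)) : Finset A := {u | ∃ e ∈ T, u ∈ e.1}

/-- Every set of edges in `S` has at most `d` times as many members as it covers vertices. -/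
def EdgeDensityLE (S : Finset (Edge A)) (d : ℝ) : Prop :=
  ∀ T ⊆ S, (T.card : ℝ) ≤ d * (coveredVertices T).card

lemma coveredVertices_nonempty {T : Finset (Edge A)} (hT : T.Nonempty) :
    (coveredVertices T).Nonempty := by
  obtain ⟨e, he⟩ := hT
  exact ⟨e.1.out.1, Finset.mem_filter.2 ⟨Finset.mem_univ _, e, he, Sym2.out_fst_mem _⟩⟩

lemma coveredVertices_subset_overlap {φ ψ : A ↪ V} {T : Finset (Edge A)}
    (hT : ∀ e ∈ T, edgeImage φ e = edgeImage ψ e) : coveredVertices T ⊆ overlap φ ψ := by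
  intro u hu
  obtain ⟨e, he, hue⟩ := (Finset.mem_filter.1 hu).2
  exact Finset.mem_filter.2
    ⟨Finset.mem_univ _, apply_mem_range_of_edgeImage_eq (hT e he) hue⟩

lemma mul_rpow_le_pow_mul_pow {x p d : ℝ} (hp : 0 < p) (hp1 : p ≤ 1) (hx : 1 ≤ x * p ^ d) {v t : ℕ}
    (hv : v ≠ 0) (ht : (t : ℝ) ≤ d * v) : x * p ^ d ≤ x ^ v * p ^ t := by
  have x_nonneg : 0 ≤ x :=
    (pos_of_mul_pos_left (one_pos.trans_le hx) (Real.rpow_nonneg hp.le d)).le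
  calc x * p ^ d ≤ (x * p ^ d) ^ v := le_self_pow₀ hx hv
    _ = x ^ v * p ^ (d * v) := by rw [mul_pow, Real.rpow_mul hp.le, Real.rpow_natCast]
    _ ≤ x ^ v * p ^ (t : ℝ) :=
        mul_le_mul_of_nonneg_left (Real.rpow_le_rpow_of_exponent_ge hp hp1 ht) (by positivity)
    _ = x ^ v * p ^ t := by rw [Real.rpow_natCast]

lemma pow_card_filter_mul_prod_le {ι : Type*} {p : ℝ} (hp : 0 ≤ p) (hp1 : p ≤ 1) (S : Finset ι)
    (P : ι → Prop) [DecidablePred P] :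
    p ^ ({j ∈ S | P j} : Finset ι).card * ∏ j ∈ S, (p ^ 2 + p * (if P j then 1 else 0)) ≤
      2 ^ S.card * (p ^ S.card) ^ 2 := by
  rw [← Finset.prod_const, Finset.prod_filter, ← Finset.prod_mul_distrib, ← pow_mul,
    mul_comm S.card, pow_mul, ← mul_pow, ← Finset.prod_const]
  refine Finset.prod_le_prod (fun j _ => by split_ifs <;> positivity) fun j _ => ?_
  split_ifs <;> nlinarith [sq_nonneg p]

variable [Fintype V]

lemma sum_pow_overlap_le (φ : A ↪ V) :
    ∑ ψ : A ↪ V, (Fintype.card V : ℝ) ^ (overlap φ ψ).card ≤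
      (Fintype.card A + 1) ^ Fintype.card A * (Fintype.card V : ℝ) ^ Fintype.card A := by
  let weight (y : V) : ℝ := if y ∈ Set.range φ then Fintype.card V else 1
  have weight_nonneg (y : V) : 0 ≤ weight y := by
    simp only [weight]
    split_ifs <;> positivity
  have sum_weight_le : ∑ y, weight y ≤ (Fintype.card A + 1) * (Fintype.card V : ℝ) :=
    calc ∑ y, weight y
        ≤ ∑ y, ((if y ∈ Set.range φ then (Fintype.card V : ℝ) else 0) + 1) :=
          Finset.sum_le_sum fun y _ => by
            simp only [weight]
            split_ifs <;> simp
      _ = (Fintype.card A + 1) * (Fintype.card V : ℝ) := by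
          have card_range : (({y | y ∈ Set.range φ} : Finset V).card) = Fintype.card A := by
            rw [← Finset.card_univ, ← Finset.card_map φ]
            congr 1
            ext
            simp
          rw [Finset.sum_add_distrib, ← Finset.sum_filter, Finset.sum_const, card_range,
            Finset.sum_const, Finset.card_univ]
          simp only [nsmul_eq_mul]
          ring
  calc ∑ ψ : A ↪ V, (Fintype.card V : ℝ) ^ (overlap φ ψ).card
      = ∑ ψ : A ↪ V, ∏ u, weight (ψ u) := by
        simp only [weight, overlap, Finset.prod_ite, Finset.prod_const, one_pow, mul_one]
    _ ≤ ∑ ψ : A → V, ∏ u, weight (ψ u) := by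
        rw [← Finset.sum_image (f := fun ψ : A → V => ∏ u, weight (ψ u))
          (DFunLike.coe_injective (F := A ↪ V)).injOn]
        exact Finset.sum_le_sum_of_subset_of_nonneg (Finset.subset_univ _)
          fun ψ _ _ => Finset.prod_nonneg fun u _ => weight_nonneg _
    _ = (∑ y, weight y) ^ Fintype.card A := by
        rw [← Finset.card_univ, ← Finset.prod_const, Finset.prod_univ_sum, Fintype.piFinset_univ]
    _ ≤ ((Fintype.card A + 1) * (Fintype.card V : ℝ)) ^ Fintype.card A :=
        pow_le_pow_left₀ (Finset.sum_nonneg fun y _ => weight_nonneg y) sum_weight_le _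
    _ = _ := mul_pow _ _ _

lemma sum_sum_pow_overlap_le :
    ∑ φ : A ↪ V, ∑ ψ : A ↪ V, (Fintype.card V : ℝ) ^ (overlap φ ψ).card ≤
      (Fintype.card A + 1) ^ Fintype.card A *
        ((Fintype.card V : ℝ) ^ Fintype.card A) ^ 2 := by
  have card_embedding_le : (Fintype.card (A ↪ V) : ℝ) ≤
      (Fintype.card V : ℝ) ^ Fintype.card A := by
    rw [Fintype.card_embedding_eq]
    exact_mod_cast Nat.descFactorial_le_pow _ _
  refine (Finset.sum_le_sum fun φ _ => sum_pow_overlap_le φ).trans ?_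
  rw [Finset.sum_const, Finset.card_univ, nsmul_eq_mul, sq]
  refine (mul_le_mul_of_nonneg_right card_embedding_le (by positivity)).trans_eq ?_
  ring

variable {p d : ℝ} {S : Finset (Edge A)} {e : Edge A}

/- A density bound on a set of edges on which `φ` and `ψ` agree lets the vertices they share pay
for a factor `p` for each of these edges. -/
lemma mul_rpow_le_pow_overlap_mul_pow (hp : 0 < p) (hp1 : p ≤ 1)
    (hd : 1 ≤ Fintype.card V * p ^ d) {T : Finset (Edge A)} (hT : T.Nonempty)
    (hdens : (T.card : ℝ) ≤ d * (coveredVertices T).card) {φ ψ : A ↪ V}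
    (hagree : ∀ e ∈ T, edgeImage φ e = edgeImage ψ e) :
    Fintype.card V * p ^ d ≤ (Fintype.card V : ℝ) ^ (overlap φ ψ).card * p ^ T.card := by
  have one_le_card : (1 : ℝ) ≤ Fintype.card V := by
    rw [Nat.one_le_cast, Nat.one_le_iff_ne_zero]
    intro h0
    norm_num [h0] at hd
  refine (mul_rpow_le_pow_mul_pow hp hp1 hd
    (coveredVertices_nonempty hT).card_ne_zero hdens).trans ?_
  gcongr
  exact coveredVertices_subset_overlap hagree

lemma mul_prod_agreement_le (hp : 0 < p) (hp1 : p ≤ 1) (hd : 1 ≤ Fintype.card V * p ^ d)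
    (he : e ∉ S) (hS : EdgeDensityLE (insert e S) d) (φ ψ : A ↪ V) :
    Fintype.card V * p ^ d *
        ((∏ e' ∈ S, (p ^ 2 + p * (if edgeImage φ e' = edgeImage ψ e' then 1 else 0))) *
          (p * (if edgeImage φ e = edgeImage ψ e then 1 else 0))) ≤
      2 ^ S.card * (p ^ (S.card + 1)) ^ 2 * (Fintype.card V : ℝ) ^ (overlap φ ψ).card := by
  split_ifs with hagree
  swap
  · rw [mul_zero, mul_zero, mul_zero]
    positivity
  let T : Finset (Edge A) := {e' ∈ S | edgeImage φ e' = edgeImage ψ e'}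
  have heT : e ∉ T := fun h => he (Finset.mem_filter.1 h).1
  have trade := mul_rpow_le_pow_overlap_mul_pow hp hp1 hd (Finset.insert_nonempty e T)
    (hS _ (Finset.insert_subset_insert e (Finset.filter_subset _ S))) (φ := φ) (ψ := ψ)
    (Finset.forall_mem_insert _ _ _ |>.2 ⟨hagree, fun e' he' => (Finset.mem_filter.1 he').2⟩)
  rw [Finset.card_insert_of_notMem heT] at trade
  set agreementProd : ℝ :=
    ∏ e' ∈ S, (p ^ 2 + p * (if edgeImage φ e' = edgeImage ψ e' then 1 else 0))
  have prod_nonneg : 0 ≤ agreementProd :=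
    Finset.prod_nonneg fun e' _ => by split_ifs <;> positivity
  have prod_le : p ^ T.card * agreementProd ≤ 2 ^ S.card * (p ^ S.card) ^ 2 :=
    pow_card_filter_mul_prod_le hp.le hp1 S fun e' => edgeImage φ e' = edgeImage ψ e'
  calc Fintype.card V * p ^ d * (agreementProd * (p * 1))
      ≤ (Fintype.card V : ℝ) ^ (overlap φ ψ).card * p ^ (T.card + 1) *
          (agreementProd * (p * 1)) :=
        mul_le_mul_of_nonneg_right trade (mul_nonneg prod_nonneg (by positivity))
    _ = (Fintype.card V : ℝ) ^ (overlap φ ψ).card * p ^ 2 * (p ^ T.card * agreementProd) := by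
        ring
    _ ≤ (Fintype.card V : ℝ) ^ (overlap φ ψ).card * p ^ 2 *
          (2 ^ S.card * (p ^ S.card) ^ 2) :=
        mul_le_mul_of_nonneg_left prod_le (by positivity)
    _ = 2 ^ S.card * (p ^ (S.card + 1)) ^ 2 * (Fintype.card V : ℝ) ^ (overlap φ ψ).card := by
        ring

lemma mul_sum_sum_prod_agreement_le (hp : 0 < p) (hp1 : p ≤ 1)
    (hd : 1 ≤ Fintype.card V * p ^ d) (he : e ∉ S) (hS : EdgeDensityLE (insert e S) d) :
    Fintype.card V * p ^ d * ∑ φ : A ↪ V, ∑ ψ : A ↪ V,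
        (∏ e' ∈ S, (p ^ 2 + p * (if edgeImage φ e' = edgeImage ψ e' then 1 else 0))) *
          (p * (if edgeImage φ e = edgeImage ψ e then 1 else 0)) ≤
      2 ^ S.card * (Fintype.card A + 1) ^ Fintype.card A *
        ((Fintype.card V : ℝ) ^ Fintype.card A * p ^ (S.card + 1)) ^ 2 := by
  calc _ ≤ ∑ φ : A ↪ V, ∑ ψ : A ↪ V, 2 ^ S.card * (p ^ (S.card + 1)) ^ 2 *
          (Fintype.card V : ℝ) ^ (overlap φ ψ).card := by
        rw [Finset.mul_sum]
        simp only [Finset.mul_sum _ _ (Fintype.card V * p ^ d)]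
        exact Finset.sum_le_sum fun φ _ => Finset.sum_le_sum fun ψ _ =>
          mul_prod_agreement_le hp hp1 hd he hS φ ψ
    _ = 2 ^ S.card * (p ^ (S.card + 1)) ^ 2 *
          ∑ φ : A ↪ V, ∑ ψ : A ↪ V, (Fintype.card V : ℝ) ^ (overlap φ ψ).card := by
        simp only [Finset.mul_sum]
    _ ≤ 2 ^ S.card * (p ^ (S.card + 1)) ^ 2 * ((Fintype.card A + 1) ^ Fintype.card A *
          ((Fintype.card V : ℝ) ^ Fintype.card A) ^ 2) := by
        gcongr
        exact sum_sum_pow_overlap_le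
    _ = _ := by ring

end OverlappingCopies

section Density

lemma edgeDensityLE_of_densityLE {A : Type} [Fintype A] {l : List (Edge A)} {d : ℝ}
    (hl : DensityLE (boardOf (l.map Subtype.val)) d) : EdgeDensityLE l.toFinset d := by
  intro T hT
  rcases T.eq_empty_or_nonempty with rfl | T_nonempty
  · simp [coveredVertices]
  refine le_trans ?_ (hl _ (coveredVertices_nonempty T_nonempty))
  rw [Nat.cast_le, edgesWithin, ← Set.ncard_coe_finset T,
    ← Set.ncard_image_of_injective (T : Set (Edge A)) Subtype.val_injective]
  refine Set.ncard_le_ncard ?_ (Set.toFinite _)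
  rintro _ ⟨e, he, rfl⟩
  have he_board : e.1 ∈ l.map Subtype.val :=
    List.mem_map_of_mem (List.mem_toFinset.1 (hT he))
  refine ⟨?_, fun v hv => Finset.mem_filter.2 ⟨Finset.mem_univ v, e, he, hv⟩⟩
  rw [boardOf, edgeSet_fromEdgeSet]
  exact ⟨he_board, e.2⟩

end Density

section PainterRuns

variable {α V : Type} {r : ℕ} {F : SimpleGraph α} (π : PainterStrategy V r)

lemma runPainterAux_append (h : EdgeHistory V r) (l l' : List (Sym2 V)) :
    runPainterAux π h (l ++ l') = runPainterAux π (runPainterAux π h l) l' := by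
  induction l generalizing h with
  | nil => rfl
  | cons e l ih => simp [runPainterAux, ih]

lemma runPainter_concat (l : List (Sym2 V)) (e : Sym2 V) :
    runPainter π (l ++ [e]) = runPainter π l ++ [(e, π (runPainter π l) e)] := by
  simp [runPainter, runPainterAux_append, runPainterAux]

lemma runPainter_isPrefix {l l' : List (Sym2 V)} (h : l <+: l') :
    runPainter π l <+: runPainter π l' := by
  obtain ⟨t, rfl⟩ := h
  induction t using List.reverseRecOn with
  | nil => simp
  | append_singleton t e ih =>
    rw [← List.append_assoc, runPainter_concat]
    exact ih.trans (List.prefix_append _ _)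

lemma map_fst_runPainter (l : List (Sym2 V)) : (runPainter π l).map Prod.fst = l := by
  induction l using List.reverseRecOn with
  | nil => rfl
  | append_singleton l e ih => simp [runPainter_concat, ih]

lemma exists_mem_runPainter {l : List (Sym2 V)} {e : Sym2 V} (he : e ∈ l) :
    ∃ c, (e, c) ∈ runPainter π l := by
  rw [← map_fst_runPainter π l] at he
  simpa using he

lemma hasMonoCopy_of_embedding {A : Type} (φ : A ↪ V) {h : EdgeHistory A r}
    {h' : EdgeHistory V r} (hφ : ∀ e c, (e, c) ∈ h → (e.map φ, c) ∈ h')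
    (hF : HasMonoCopy F h) : HasMonoCopy F h' := by
  obtain ⟨c, g, hg⟩ := hF
  refine ⟨c, g.trans φ, fun u v huv => ?_⟩
  have hadj := hg u v huv
  simp only [colorGraph, fromEdgeSet_adj, Set.mem_ofPred_eq] at hadj ⊢
  exact ⟨hφ _ _ hadj.1, φ.injective.ne hadj.2⟩

lemma hasMonoCopy_mono {h h' : EdgeHistory V r} (hh : h <+: h') (hF : HasMonoCopy F h) :
    HasMonoCopy F h' :=
  hasMonoCopy_of_embedding (Function.Embedding.refl V)
    (fun e c hec => hh.subset (by simpa using hec)) hF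

end PainterRuns

section OnlineProbability

variable {α V : Type} {r : ℕ}

/-- Equals `1` if the Painter strategy `π` creates a monochromatic copy of `F` when the edges in
`g` are drawn one after the other, and `0` otherwise. -/
noncomputable def monoCopyIndicator (F : SimpleGraph α) (π : PainterStrategy V r)
    (g : List (Edge V)) : ℝ :=
  if HasMonoCopy F (runPainter π (g.map Subtype.val)) then 1 else 0

lemma monoCopyIndicator_le_concat (F : SimpleGraph α) (π : PainterStrategy V r)
    (g : List (Edge V)) (e : Edge V) :
    monoCopyIndicator F π g ≤ monoCopyIndicator F π (g ++ [e]) := by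
  have mono := hasMonoCopy_mono (F := F)
    (runPainter_isPrefix π ((List.prefix_append g [e]).map Subtype.val))
  simp only [monoCopyIndicator]
  split_ifs with h h'
  · exact le_rfl
  · exact absurd (mono h) h'
  · exact zero_le_one
  · exact le_rfl

lemma ncard_validSeqFun_and (n N : ℕ) (P : (Fin N → Sym2 (Fin n)) → Prop) :
    (Set.ncard {f : Fin N → Sym2 (Fin n) | ValidSeqFun f ∧ P f} : ℝ) =
      ∑ s : Fin N → Edge (Fin n),
        if Function.Injective s ∧ P (fun i => (s i).1) then 1 else 0 := by
  rw [Finset.sum_boole, Nat.cast_inj, ← Set.ncard_coe_finset]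
  symm
  refine Set.ncard_congr (fun s _ i => (s i).1) (fun s hs => ?_) (fun s t _ _ h => ?_)
    fun f hf => ?_
  · simp only [Finset.coe_filter, Finset.mem_univ, true_and, Set.mem_ofPred_eq] at hs ⊢
    exact ⟨⟨fun i j hij => hs.1 (Subtype.ext hij), fun i => (s i).2⟩, hs.2⟩
  · exact funext fun i => Subtype.ext (congrFun h i)
  · refine ⟨fun i => ⟨f i, hf.1.2 i⟩, ?_, rfl⟩
    simp only [Finset.coe_filter, Finset.mem_univ, true_and, Set.mem_ofPred_eq]
    exact ⟨fun i j hij => hf.1.1 (congrArg Subtype.val hij), hf.2⟩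

lemma ncard_validSeqFun (n N : ℕ) :
    (Set.ncard {f : Fin N → Sym2 (Fin n) | ValidSeqFun f} : ℝ) =
      ((n.choose 2).descFactorial N : ℝ) := by
  have count := ncard_validSeqFun_and n N fun _ => True
  simp only [and_true] at count
  rw [count, Finset.sum_boole, ← Fintype.card_subtype,
    Fintype.card_congr (Equiv.subtypeInjectiveEquivEmbedding _ _), Fintype.card_embedding_eq,
    card_edge, Fintype.card_fin, Fintype.card_fin]

lemma drawAverage_le_onlineProb (F : SimpleGraph α) {n N t : ℕ} (π : PainterStrategy (Fin n) r)
    [Nonempty (Edge (Fin n))] (ht : t ≤ N) (hN : N ≤ n.choose 2) :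
    drawAverage (monoCopyIndicator F π) t [] ≤ onlineProb n N (OnlineMonoCopy F π) := by
  have without_replacement := drawAverage_mul_descFactorial_le (monoCopyIndicator_le_concat F π)
    (List.nodup_nil (α := Edge (Fin n))) (t := N)
    (by simpa only [List.length_nil, zero_add, card_edge, Fintype.card_fin] using hN)
  simp only [List.length_nil, Nat.sub_zero, List.nil_append, card_edge, Fintype.card_fin,
    List.nodup_ofFn] at without_replacement
  refine (drawAverage_mono (monoCopyIndicator_le_concat F π) [] ht).trans ?_
  rw [onlineProb, ncard_validSeqFun,
    le_div_iff₀ (by exact_mod_cast Nat.descFactorial_pos.2 hN), ncard_validSeqFun_and]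
  refine without_replacement.trans_eq (Finset.sum_congr rfl fun s _ => ?_)
  simp only [monoCopyIndicator, OnlineMonoCopy, List.map_ofFn, ← ite_and]
  exact if_congr Iff.rfl rfl rfl

lemma onlineProb_le_one (n N : ℕ) (P : (Fin N → Sym2 (Fin n)) → Prop) :
    onlineProb n N P ≤ 1 := by
  have subset : {f : Fin N → Sym2 (Fin n) | ValidSeqFun f ∧ P f} ⊆ {f | ValidSeqFun f} :=
    fun f hf => hf.1
  exact div_le_one_of_le₀ (by exact_mod_cast Set.ncard_le_ncard subset (Set.toFinite _))
    (Nat.cast_nonneg _)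

end OnlineProbability

section BuilderGame

variable {α A : Type} {r : ℕ} {F : SimpleGraph α} {d : ℝ}

/-- Builder has a winning strategy with density restriction `d` on the vertex set `A`. -/
def BuilderWinsOn (F : SimpleGraph α) (r : ℕ) (d : ℝ) (A : Type) : Prop :=
  ∀ π : PainterStrategy A r, ∃ l : List (Sym2 A),
    ValidEdgeSeq l ∧ (∀ i : ℕ, DensityLE (boardOf (l.take i)) d) ∧
      HasMonoCopy F (runPainter π l)

/-- Forgets that the edges of a colored sequence are not loops. -/
def toHistory (h : List (Edge A × Fin r)) : EdgeHistory A r := h.map (Prod.map Subtype.val id)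

/-- After the colored edges `h`, Builder may present `e` under the density restriction `d`. -/
def LegalMove (d : ℝ) (h : List (Edge A × Fin r)) (e : Edge A) : Prop :=
  (h.map Prod.fst ++ [e]).Nodup ∧
    DensityLE (boardOf ((h.map Prod.fst ++ [e]).map Subtype.val)) d

/- Apply Builder's strategy to the Painter who maintains `P`. -/
lemma exists_hasMonoCopy_of_invariant (hr : 0 < r) (hwin : BuilderWinsOn F r d A)
    {P : List (Edge A × Fin r) → Prop} (hnil : P [])
    (hstep : ∀ h e, P h → LegalMove d h e → ∃ c, P (h ++ [(e, c)])) :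
    ∃ h, P h ∧ HasMonoCopy F (toHistory h) := by
  let Q (H : EdgeHistory A r) : Prop := ∃ h, P h ∧ toHistory h = H
  let π : PainterStrategy A r := fun H e =>
    if hc : ∃ c, Q (H ++ [(e, c)]) then hc.choose else ⟨0, hr⟩
  have invariant (l : List (Sym2 A)) (hvalid : ValidEdgeSeq l)
      (hdens : ∀ l', l' <+: l → DensityLE (boardOf l') d) : Q (runPainter π l) := by
    induction l using List.reverseRecOn with
    | nil => exact ⟨[], hnil, rfl⟩
    | append_singleton l e ih =>
      obtain ⟨h, hP, hrun⟩ := ih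
        ⟨hvalid.1.sublist (List.sublist_append_left l [e]),
          fun e' he' => hvalid.2 e' (List.mem_append_left _ he')⟩
        fun _ hl' => hdens _ (hl'.trans (List.prefix_append l [e]))
      let e₀ : Edge A := ⟨e, hvalid.2 e (by simp)⟩
      have presented : (h.map Prod.fst ++ [e₀]).map Subtype.val = l ++ [e] := by
        rw [← map_fst_runPainter π l, ← hrun]
        simp [toHistory, e₀]
      have legal : LegalMove d h e₀ :=
        ⟨List.Nodup.of_map Subtype.val (presented ▸ hvalid.1),
          presented ▸ hdens _ List.prefix_rfl⟩
      obtain ⟨c, hc⟩ := hstep h e₀ hP legal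
      have color_exists : ∃ c, Q (runPainter π l ++ [(e, c)]) :=
        ⟨c, _, hc, by rw [← hrun]; simp [toHistory, e₀]⟩
      rw [runPainter_concat, show π (runPainter π l) e = color_exists.choose from
        dif_pos color_exists]
      exact color_exists.choose_spec
  obtain ⟨l, hvalid, hdens, hcopy⟩ := hwin π
  obtain ⟨h, hP, hrun⟩ := invariant l hvalid fun l' hl' =>
    List.prefix_iff_eq_take.1 hl' ▸ hdens l'.length
  exact ⟨h, hP, hrun ▸ hcopy⟩

end BuilderGame

section BlockCounts

variable {A V : Type} {r K m : ℕ}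

/-- The board after the first `j` of `K` blocks of `m` draws with replacement. -/
noncomputable def boardAfter (f : Fin K → Fin m → Edge V) (j : ℕ) : List (Edge V) :=
  extendDistinct [] ((List.ofFn fun i => List.ofFn (f i)).take j).flatten

/-- The board after the first `j` blocks, as colored by the Painter strategy `π`. -/
noncomputable def historyAfter (π : PainterStrategy V r) (f : Fin K → Fin m → Edge V) (j : ℕ) :
    EdgeHistory V r :=
  runPainter π ((boardAfter f j).map Subtype.val)

lemma boardAfter_update (f : Fin K → Fin m → Edge V) {k : Fin K} (y : Fin m → Edge V) {j : ℕ}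
    (hj : j ≤ k) : boardAfter (Function.update f k y) j = boardAfter f j := by
  rw [boardAfter, boardAfter]
  congr 2
  refine List.ext_getElem (by simp) fun i hi _ => ?_
  simp only [List.getElem_take, List.getElem_ofFn]
  have hik : i < k := by
    rw [List.length_take, lt_min_iff] at hi
    exact hi.1.trans_le hj
  rw [Function.update_of_ne (Fin.ne_of_lt hik)]

lemma boardAfter_isPrefix (f : Fin K → Fin m → Edge V) {i j : ℕ} (hij : i ≤ j) :
    boardAfter f i <+: boardAfter f j := by
  obtain ⟨t, ht⟩ := List.take_prefix_take_left (l := List.ofFn fun i => List.ofFn (f i)) hij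
  rw [boardAfter, boardAfter, ← ht, List.flatten_append, extendDistinct_append]
  exact prefix_extendDistinct _ _

lemma mem_boardAfter_succ (f : Fin K → Fin m → Edge V) (k : Fin K) (i : Fin m) :
    f k i ∈ boardAfter f (k + 1) := by
  refine mem_extendDistinct.2 (Or.inr (List.mem_flatten.2 ⟨List.ofFn (f k), ?_, by simp⟩))
  rw [List.mem_take_iff_getElem]
  exact ⟨k, by simp, by simp⟩

lemma historyAfter_isPrefix (π : PainterStrategy V r) (f : Fin K → Fin m → Edge V) {i j : ℕ}
    (hij : i ≤ j) : historyAfter π f i <+: historyAfter π f j :=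
  runPainter_isPrefix π ((boardAfter_isPrefix f hij).map Subtype.val)

/-- The number of draws in block `j` that hit the image of the edge `q.1` under `φ`, provided
that Painter gives this image the color `q.2`, and `0` otherwise. -/
noncomputable def slotWeight (π : PainterStrategy V r) (f : Fin K → Fin m → Edge V) (φ : A ↪ V)
    (j : Fin K) (q : Edge A × Fin r) : ℝ :=
  if ((edgeImage φ q.1).1, q.2) ∈ historyAfter π f (j + 1) then
    hitCount (f j) (edgeImage φ q.1) else 0

/-- The number of ways to draw the image under `φ` of the colored edges `h`, the `j`-th edge in
block `j` and with the prescribed color. -/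
noncomputable def copyWeight (π : PainterStrategy V r) (f : Fin K → Fin m → Edge V) (φ : A ↪ V)
    (h : List (Edge A × Fin r)) : ℝ :=
  ∏ j : Fin K, (h[(j : ℕ)]?).elim 1 (slotWeight π f φ j)

variable (π : PainterStrategy V r) (f : Fin K → Fin m → Edge V) (φ : A ↪ V)
  {h : List (Edge A × Fin r)} {k : Fin K}

lemma slotWeight_nonneg (j : Fin K) (q : Edge A × Fin r) : 0 ≤ slotWeight π f φ j q := by
  rw [slotWeight]
  split_ifs
  · exact hitCount_nonneg _ _
  · exact le_rfl

lemma slotWeight_le (j : Fin K) (q : Edge A × Fin r) :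
    slotWeight π f φ j q ≤ hitCount (f j) (edgeImage φ q.1) := by
  rw [slotWeight]
  split_ifs
  · exact le_rfl
  · exact hitCount_nonneg _ _

lemma hitCount_le_sum_slotWeight (k : Fin K) (e : Edge A) :
    hitCount (f k) (edgeImage φ e) ≤ ∑ c, slotWeight π f φ k (e, c) := by
  by_cases hit : ∃ i, f k i = edgeImage φ e
  · obtain ⟨i, hi⟩ := hit
    obtain ⟨c, hc⟩ := exists_mem_runPainter π
      (List.mem_map_of_mem (f := Subtype.val) (hi ▸ mem_boardAfter_succ f k i))
    calc hitCount (f k) (edgeImage φ e) = slotWeight π f φ k (e, c) := (if_pos hc).symm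
      _ ≤ _ := Finset.single_le_sum (f := fun c => slotWeight π f φ k (e, c))
        (fun c _ => slotWeight_nonneg π f φ k (e, c)) (Finset.mem_univ c)
  · have no_hit : hitCount (f k) (edgeImage φ e) = 0 :=
      Finset.sum_eq_zero fun i _ => if_neg fun hi => hit ⟨i, hi⟩
    rw [no_hit]
    exact Finset.sum_nonneg fun c _ => slotWeight_nonneg π f φ k (e, c)

lemma copyWeight_nonneg (h : List (Edge A × Fin r)) : 0 ≤ copyWeight π f φ h :=
  Finset.prod_nonneg fun j _ => by
    cases h[(j : ℕ)]? with
    | none => exact zero_le_one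
    | some q => exact slotWeight_nonneg π f φ j q

lemma copyWeight_nil : copyWeight π f φ [] = 1 :=
  Finset.prod_eq_one fun _ _ => rfl

lemma copyWeight_eq_prod_Iio (hk : h.length = k) :
    copyWeight π f φ h = ∏ j ∈ Finset.Iio k, (h[(j : ℕ)]?).elim 1 (slotWeight π f φ j) := by
  refine (Finset.prod_subset (Finset.subset_univ _) fun j _ hj => ?_).symm
  rw [Finset.mem_Iio, not_lt, Fin.le_def] at hj
  rw [List.getElem?_eq_none (hk.trans_le hj), Option.elim_none]

lemma copyWeight_update (hk : h.length = k) (y : Fin m → Edge V) :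
    copyWeight π (Function.update f k y) φ h = copyWeight π f φ h := by
  rw [copyWeight_eq_prod_Iio π _ φ hk, copyWeight_eq_prod_Iio π f φ hk]
  refine Finset.prod_congr rfl fun j hj => ?_
  have hjk : j < k := Finset.mem_Iio.1 hj
  congr 1
  funext q
  rw [slotWeight, slotWeight, historyAfter, historyAfter, boardAfter_update f y hjk,
    Function.update_of_ne hjk.ne]

lemma copyWeight_le (hk : h.length = k) (e : Edge A) :
    copyWeight π f φ h ≤
      ∏ j ∈ Finset.Iio k, hitCount (f j) (edgeImage φ ((h.map Prod.fst).getD j e)) := by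
  rw [copyWeight_eq_prod_Iio π f φ hk]
  have slot (j : Fin K) (hj : j ∈ Finset.Iio k) : ∃ q, h[(j : ℕ)]? = some q := by
    rw [Finset.mem_Iio, Fin.lt_def] at hj
    exact ⟨_, List.getElem?_eq_getElem (hk ▸ hj)⟩
  refine Finset.prod_le_prod (fun j hj => ?_) fun j hj => ?_
  · obtain ⟨q, hq⟩ := slot j hj
    rw [hq]
    exact slotWeight_nonneg π f φ j q
  · obtain ⟨q, hq⟩ := slot j hj
    rw [List.getD_eq_getElem?_getD, List.getElem?_map, hq]
    exact slotWeight_le π f φ j q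

lemma copyWeight_concat (hk : h.length = k) (q : Edge A × Fin r) :
    copyWeight π f φ (h ++ [q]) = copyWeight π f φ h * slotWeight π f φ k q := by
  rw [copyWeight, copyWeight, ← Finset.prod_erase_mul _ _ (Finset.mem_univ k),
    ← Finset.prod_erase_mul Finset.univ (fun j : Fin K => (h[(j : ℕ)]?).elim 1 _)
      (Finset.mem_univ k)]
  have other_slots (j : Fin K) (hj : j ∈ Finset.univ.erase k) :
      (h ++ [q])[(j : ℕ)]? = h[(j : ℕ)]? := by
    have : (j : ℕ) ≠ h.length :=
      fun hjk => (Finset.mem_erase.1 hj).1 (Fin.ext (hjk.trans hk))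
    grind
  rw [Finset.prod_congr rfl fun j hj => by rw [other_slots j hj]]
  simp [← hk]

variable [Fintype A] [Fintype V]

/-- The total weight of the images of the colored edges `h`. -/
noncomputable def totalCopyWeight (h : List (Edge A × Fin r)) : ℝ := ∑ φ : A ↪ V, copyWeight π f φ h

/-- The number of ways to extend an image of `h` by hitting the image of `e` in block `k`,
whatever color Painter gives it. -/
noncomputable def extensionWeight (h : List (Edge A × Fin r)) (k : Fin K) (e : Edge A) : ℝ :=
  ∑ φ : A ↪ V, copyWeight π f φ h * hitCount (f k) (edgeImage φ e)

lemma totalCopyWeight_nil : totalCopyWeight π f ([] : List (Edge A × Fin r)) =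
    ((Fintype.card V).descFactorial (Fintype.card A) : ℝ) := by
  simp [totalCopyWeight, copyWeight_nil]

lemma extensionWeight_le_sum_totalCopyWeight (hk : h.length = k) (e : Edge A) :
    extensionWeight π f h k e ≤ ∑ c, totalCopyWeight π f (h ++ [(e, c)]) := by
  simp only [extensionWeight, totalCopyWeight]
  rw [Finset.sum_comm]
  refine Finset.sum_le_sum fun φ _ => ?_
  simp only [copyWeight_concat π f φ hk, ← Finset.mul_sum]
  exact mul_le_mul_of_nonneg_left (hitCount_le_sum_slotWeight π f φ k e)
    (copyWeight_nonneg π f φ h)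

lemma hasMonoCopy_of_totalCopyWeight_pos {α : Type} {F : SimpleGraph α}
    (hpos : 0 < totalCopyWeight π f h) (hK : h.length ≤ K) (hF : HasMonoCopy F (toHistory h)) :
    HasMonoCopy F (historyAfter π f K) := by
  obtain ⟨φ, -, hφ⟩ := Finset.exists_ne_zero_of_sum_ne_zero hpos.ne'
  refine hasMonoCopy_of_embedding φ (fun e c hec => ?_) hF
  obtain ⟨q, hq, hqe⟩ := List.mem_map.1 hec
  obtain ⟨j, hj, rfl⟩ := List.mem_iff_getElem.1 hq
  have slot_ne_zero := Finset.prod_ne_zero_iff.1 hφ ⟨j, by omega⟩ (Finset.mem_univ _)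
  rw [List.getElem?_eq_getElem hj, Option.elim_some, slotWeight, ite_ne_right_iff]
    at slot_ne_zero
  obtain ⟨rfl, rfl⟩ := Prod.mk.inj hqe
  exact (historyAfter_isPrefix π f (by grind)).subset slot_ne_zero.1

end BlockCounts

section SecondMoment

variable {A V : Type} {r K m : ℕ} [Fintype A] [Fintype V] [Nonempty (Edge V)]
  (π : PainterStrategy V r) {p d : ℝ} {h : List (Edge A × Fin r)} {k : Fin K} {e : Edge A}

lemma prod_Iio_getD {ι : Type*} {l : List ι} (hl : l.Nodup) (hk : l.length = k) (x : ι)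
    (g : ι → ℝ) : ∏ j ∈ Finset.Iio k, g (l.getD j x) = ∏ y ∈ l.toFinset, g y := by
  have getD_eq (j : Fin K) (hj : j ∈ Finset.Iio k) :
      ∃ hj : (j : ℕ) < l.length, l.getD j x = l[j] := by
    have hj' : (j : ℕ) < l.length := hk ▸ Fin.lt_def.1 (Finset.mem_Iio.1 hj)
    exact ⟨hj', List.getD_eq_getElem _ _ hj'⟩
  refine Finset.prod_nbij (fun j : Fin K => l.getD j x) (fun j hj => ?_) (fun i hi j hj hij => ?_)
    (fun y hy => ?_) fun _ _ => rfl
  · obtain ⟨hj', hjx⟩ := getD_eq j hj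
    exact List.mem_toFinset.2 (hjx ▸ List.getElem_mem _)
  · obtain ⟨_, hix⟩ := getD_eq i hi
    obtain ⟨_, hjx⟩ := getD_eq j hj
    exact Fin.ext ((List.Nodup.getElem_inj_iff hl).1 (hix.symm.trans (hij.trans hjx)))
  · obtain ⟨j, hj, rfl⟩ := List.mem_iff_getElem.1 (List.mem_toFinset.1 hy)
    refine ⟨⟨j, by omega⟩, ?_, List.getD_eq_getElem _ _ hj⟩
    simp only [Finset.coe_Iio, Set.mem_Iio, Fin.lt_def]
    omega

lemma mul_expect_sq_extensionWeight_sub_le (hp : p = m / Fintype.card (Edge V)) (hp0 : 0 < p)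
    (hp1 : p ≤ 1) (hd : 1 ≤ Fintype.card V * p ^ d) (hk : h.length = k)
    (he : LegalMove d h e) :
    Fintype.card V * p ^ d * 𝔼 f : Fin K → Fin m → Edge V,
        (extensionWeight π f h k e - p * totalCopyWeight π f h) ^ 2 ≤
      2 ^ (k : ℕ) * (Fintype.card A + 1) ^ Fintype.card A *
        ((Fintype.card V : ℝ) ^ Fintype.card A * p ^ ((k : ℕ) + 1)) ^ 2 := by
  set S : Finset (Edge A) := (h.map Prod.fst).toFinset with hS
  obtain ⟨nodup, dens⟩ := he
  have length_eq : (h.map Prod.fst).length = k := by rw [List.length_map, hk]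
  have nodup_fst : (h.map Prod.fst).Nodup := nodup.of_append_left
  have card_S : S.card = k := by rw [hS, List.toFinset_card_of_nodup nodup_fst, length_eq]
  have he_notMem : e ∉ S := by
    rw [hS, List.mem_toFinset]
    exact fun h' => List.disjoint_of_nodup_append nodup h' (List.mem_singleton_self e)
  have density : EdgeDensityLE (insert e S) d := by
    convert edgeDensityLE_of_densityLE dens using 1
    ext
    simp [hS]
  have second_moment := expect_sq_extension_sub_le hp (Finset.Iio k) k
    (fun j (φ : A ↪ V) => edgeImage φ ((h.map Prod.fst).getD j e))
    (fun f φ => copyWeight_nonneg π f φ h) (fun f φ => copyWeight_le π f φ hk e)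
    fun f φ y => copyWeight_update π f φ hk y
  have getD_k : (h.map Prod.fst).getD k e = e := List.getD_eq_default _ _ length_eq.le
  simp only [getD_k] at second_moment
  rw [← card_S]
  refine (mul_le_mul_of_nonneg_left (second_moment.trans_eq ?_) (by linarith)).trans
    (mul_sum_sum_prod_agreement_le hp0 hp1 hd he_notMem density)
  refine Finset.sum_congr rfl fun φ _ => Finset.sum_congr rfl fun ψ _ => ?_
  congr 1
  convert prod_Iio_getD nodup_fst length_eq e
    fun e' => p ^ 2 + p * (if edgeImage φ e' = edgeImage ψ e' then 1 else 0)

end SecondMoment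

section BuilderSimulation

variable {α A V : Type} {r K m : ℕ} [Fintype A] [Fintype V]

/-- The lower bound on the total weight of a colored sequence of length `i` that the simulated
Painter maintains; each step costs a factor `r` for the color and `2` for the deviation. -/
noncomputable def weightThreshold (A V : Type) [Fintype A] [Fintype V] (r : ℕ) (ε p : ℝ) (i : ℕ) :
    ℝ :=
  ε * (Fintype.card V : ℝ) ^ Fintype.card A * (p / (2 * r)) ^ i

/-- The triples `(k, h, e)` for which `e` is a legal move after `h` in step `k` of the game on
`A`. -/
noncomputable def legalMoves (A : Type) [Fintype A] (r K : ℕ) (d : ℝ) :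
    Finset (Fin K × List (Edge A × Fin r) × Edge A) :=
  {x ∈ Finset.univ ×ˢ (List.finite_length_lt (Edge A × Fin r) K).toFinset ×ˢ Finset.univ |
    x.2.1.length = x.1 ∧ LegalMove d x.2.1 x.2.2}

lemma mem_legalMoves {d : ℝ} {k : Fin K} {h : List (Edge A × Fin r)} {e : Edge A} :
    (k, h, e) ∈ legalMoves A r K d ↔ h.length = k ∧ LegalMove d h e := by
  simp only [legalMoves, Finset.mem_filter, Finset.mem_product, Finset.mem_univ, true_and,
    and_true, Set.Finite.mem_toFinset, Set.mem_ofPred_eq, and_iff_right_iff_imp]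
  exact fun h => h.1.trans_lt k.2

variable {F : SimpleGraph α} {d p ε : ℝ} (π : PainterStrategy V r)
  (f : Fin K → Fin m → Edge V)

lemma exists_weightThreshold_le (hr : 0 < r) {h : List (Edge A × Fin r)} {k : Fin K} {e : Edge A}
    (hk : h.length = k) (hp : 0 ≤ p) (hh : weightThreshold A V r ε p k ≤ totalCopyWeight π f h)
    (hdev : |extensionWeight π f h k e - p * totalCopyWeight π f h| ≤
      p * weightThreshold A V r ε p k / 2) :
    ∃ c, weightThreshold A V r ε p (k + 1) ≤ totalCopyWeight π f (h ++ [(e, c)]) := by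
  have : Nonempty (Fin r) := ⟨⟨0, hr⟩⟩
  have hr' : (r : ℝ) ≠ 0 := by exact_mod_cast hr.ne'
  have sum_thresholds : ∑ _c : Fin r, weightThreshold A V r ε p (k + 1) =
      p * weightThreshold A V r ε p k / 2 := by
    rw [Finset.sum_const, Finset.card_univ, Fintype.card_fin, nsmul_eq_mul, weightThreshold,
      weightThreshold, pow_succ]
    field_simp
  have sum_le : ∑ _c : Fin r, weightThreshold A V r ε p (k + 1) ≤
      ∑ c, totalCopyWeight π f (h ++ [(e, c)]) := by
    linarith [(abs_le.1 hdev).1, mul_le_mul_of_nonneg_left hh hp,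
      extensionWeight_le_sum_totalCopyWeight π f hk e]
  obtain ⟨c, -, hc⟩ := Finset.exists_le_of_sum_le Finset.univ_nonempty sum_le
  exact ⟨c, hc⟩

lemma hasMonoCopy_of_forall_legalMoves (hr : 0 < r) (hwin : BuilderWinsOn F r d A)
    (hK : Fintype.card (Edge A) ≤ K) (hp : 0 < p)
    (hV : 0 < Fintype.card V) (hε : 0 < ε)
    (hcard : ε * (Fintype.card V : ℝ) ^ Fintype.card A ≤
      (Fintype.card V).descFactorial (Fintype.card A))
    (hdev : ∀ x ∈ legalMoves A r K d,
      |extensionWeight π f x.2.1 x.1 x.2.2 - p * totalCopyWeight π f x.2.1| ≤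
        p * weightThreshold A V r ε p x.1 / 2) :
    HasMonoCopy F (historyAfter π f K) := by
  have length_le {h : List (Edge A × Fin r)} (nodup : (h.map Prod.fst).Nodup) : h.length ≤ K := by
    simpa using nodup.length_le_card.trans hK
  obtain ⟨h, ⟨nodup, threshold_le⟩, hcopy⟩ := exists_hasMonoCopy_of_invariant hr hwin
    (P := fun h => (h.map Prod.fst).Nodup ∧
      weightThreshold A V r ε p h.length ≤ totalCopyWeight π f h)
    ⟨List.nodup_nil, by simpa [weightThreshold, totalCopyWeight_nil] using hcard⟩
    fun h e ⟨_, threshold_le⟩ legal => by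
      have nodup_concat (c : Fin r) : ((h ++ [(e, c)]).map Prod.fst).Nodup := by
        simpa using legal.1
      have length_lt : h.length < K := by
        simpa using length_le (nodup_concat ⟨0, hr⟩)
      obtain ⟨c, hc⟩ := exists_weightThreshold_le π f hr (k := ⟨h.length, length_lt⟩) rfl hp.le
        threshold_le (hdev (_, h, e) (mem_legalMoves.2 ⟨rfl, legal⟩))
      exact ⟨c, nodup_concat c, by simpa using hc⟩
  refine hasMonoCopy_of_totalCopyWeight_pos π f (lt_of_lt_of_le ?_ threshold_le)
    (length_le nodup) hcopy
  rw [weightThreshold]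
  positivity

/-- The constant in the failure probability of the simulation: the sum over all legal moves of
the constants obtained from Chebyshev's inequality. -/
noncomputable def failureConstant (A : Type) [Fintype A] (r K : ℕ) (d ε : ℝ) : ℝ :=
  ∑ x ∈ legalMoves A r K d, 2 ^ (x.1 : ℕ) * (Fintype.card A + 1) ^ Fintype.card A *
    (2 * (2 * r) ^ (x.1 : ℕ) / ε) ^ 2

lemma one_sub_failureConstant_div_le [Nonempty (Edge V)] (hr : 0 < r)
    (hwin : BuilderWinsOn F r d A) (hK : Fintype.card (Edge A) ≤ K)
    (hp : p = m / Fintype.card (Edge V)) (hp0 : 0 < p) (hp1 : p ≤ 1)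
    (hd : 1 ≤ Fintype.card V * p ^ d) (hε : 0 < ε)
    (hcard : ε * (Fintype.card V : ℝ) ^ Fintype.card A ≤
      (Fintype.card V).descFactorial (Fintype.card A)) :
    1 - failureConstant A r K d ε / (Fintype.card V * p ^ d) ≤
      drawAverage (monoCopyIndicator F π) (K * m) [] := by
  have hV : 0 < Fintype.card V :=
    Fintype.card_pos_iff.2 ⟨(Classical.arbitrary (Edge V)).1.out.1⟩
  have threshold_pos (i : ℕ) : 0 < p * weightThreshold A V r ε p i / 2 := by
    rw [weightThreshold]
    positivity
  have chebyshev := one_sub_sum_expect_sq_div_le (legalMoves A r K d)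
    (fun x (f : Fin K → Fin m → Edge V) =>
      extensionWeight π f x.2.1 x.1 x.2.2 - p * totalCopyWeight π f x.2.1)
    (fun x _ => threshold_pos x.1) fun f hdev =>
      hasMonoCopy_of_forall_legalMoves π f hr hwin hK hp0 hV hε hcard hdev
  refine le_trans ?_ (chebyshev.trans_eq ?_)
  · rw [failureConstant, Finset.sum_div]
    refine sub_le_sub_left (Finset.sum_le_sum fun ⟨k, h, e⟩ hx => ?_) 1
    obtain ⟨hk, legal⟩ := mem_legalMoves.1 hx
    have moment := mul_expect_sq_extensionWeight_sub_le π hp hp0 hp1 hd hk legal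
    rw [div_le_div_iff₀ (pow_pos (threshold_pos _) 2) (by positivity), mul_comm]
    refine moment.trans_eq ?_
    simp only [weightThreshold, div_pow]
    field_simp
    ring
  · rw [drawAverage_mul]
    refine Finset.expect_congr rfl fun f _ => ?_
    rw [monoCopyIndicator, historyAfter, boardAfter, List.take_of_length_le (by simp)]

end BuilderSimulation

section Asymptotics

lemma half_pow_mul_pow_le_descFactorial {a n : ℕ} (h : 2 * a ≤ n) :
    (1 / 2 : ℝ) ^ a * (n : ℝ) ^ a ≤ n.descFactorial a := by
  have half_le : 1 / 2 * (n : ℝ) ≤ (n + 1 - a : ℕ) := by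
    have h_real : 2 * (a : ℝ) ≤ n := by exact_mod_cast h
    rw [Nat.cast_sub (by omega)]
    push_cast
    linarith
  calc (1 / 2 : ℝ) ^ a * (n : ℝ) ^ a = (1 / 2 * (n : ℝ)) ^ a := (mul_pow _ _ _).symm
    _ ≤ ((n + 1 - a : ℕ) : ℝ) ^ a := pow_le_pow_left₀ (by positivity) half_le a
    _ ≤ n.descFactorial a := by exact_mod_cast Nat.pow_sub_le_descFactorial n a

lemma tendsto_div_atTop_of_isLittleO {ι : Type*} {l : Filter ι} {f g : ι → ℝ}
    (hf : ∀ᶠ x in l, 0 < f x) (hg : ∀ᶠ x in l, 0 ≤ g x) (hfg : f =o[l] g) :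
    Tendsto (fun x => g x / f x) l atTop := by
  have one_isLittleO : (fun _ => (1 : ℝ)) =o[l] fun x => g x * (f x)⁻¹ :=
    (hfg.mul_isBigO (isBigO_refl (fun x => (f x)⁻¹) l)).congr'
      (hf.mono fun x hx => mul_inv_cancel₀ hx.ne') EventuallyEq.rfl
  refine ((isLittleO_one_left_iff ℝ).1 one_isLittleO).congr' ?_
  filter_upwards [hf, hg] with x hfx hgx
  rw [Real.norm_of_nonneg (by positivity), ← div_eq_mul_inv]

variable {N : ℕ → ℕ}

lemma eventually_le_of_rpow_isLittleO {s : ℝ} (hs : 0 ≤ s)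
    (hN : (fun n : ℕ => (n : ℝ) ^ s) =o[atTop] fun n => (N n : ℝ)) (K : ℕ) :
    ∀ᶠ n in atTop, K ≤ N n := by
  have one_isBigO : (fun _ : ℕ => (1 : ℝ)) =O[atTop] fun n => (n : ℝ) ^ s :=
    IsBigO.of_bound' <| (eventually_ge_atTop 1).mono fun n hn => by
      have : (1 : ℝ) ≤ (n : ℝ) ^ s := Real.one_le_rpow (by exact_mod_cast hn) hs
      simpa using this.trans (le_abs_self _)
  have tendsto_N := tendsto_div_atTop_of_isLittleO (Eventually.of_forall fun _ => one_pos)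
    (Eventually.of_forall fun n => (N n).cast_nonneg) (one_isBigO.trans_isLittleO hN)
  simpa using tendsto_N.eventually_ge_atTop (K : ℝ)

/-- The expected number of times that a given edge on `n` vertices is drawn in a block of `M / K`
uniform draws, where `M / K` is rounded down. -/
noncomputable def blockDensity (K M n : ℕ) : ℝ := (M / K : ℕ) / n.choose 2

lemma div_le_blockDensity {K M n : ℕ} (hK : 0 < K) (hM : K ≤ M) (hn : 2 ≤ n) :
    (M : ℝ) / (K * (n : ℝ) ^ 2) ≤ blockDensity K M n := by
  have floor_ge : (M : ℝ) ≤ 2 * K * (M / K : ℕ) := by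
    have hdiv : 1 ≤ M / K := (Nat.one_le_div_iff hK).2 hM
    have hlt := Nat.lt_mul_div_succ M hK
    exact_mod_cast (show M ≤ 2 * K * (M / K) by nlinarith)
  have choose_le : (n.choose 2 : ℝ) ≤ (n : ℝ) ^ 2 / 2 := by
    rw [Nat.cast_choose_two]
    nlinarith [(Nat.cast_nonneg n : (0 : ℝ) ≤ n)]
  have choose_pos : (0 : ℝ) < n.choose 2 := by exact_mod_cast Nat.choose_pos hn
  rw [blockDensity, div_le_div_iff₀ (by positivity) choose_pos]
  calc (M : ℝ) * n.choose 2 ≤ 2 * K * (M / K : ℕ) * ((n : ℝ) ^ 2 / 2) := by gcongr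
    _ = (M / K : ℕ) * (K * (n : ℝ) ^ 2) := by ring

lemma tendsto_mul_blockDensity_rpow {d : ℝ} (hd : 0 < d) {K : ℕ} (hK : 0 < K)
    (hKN : ∀ᶠ n in atTop, K ≤ N n)
    (hN : (fun n : ℕ => (n : ℝ) ^ ((2 : ℝ) - 1 / d)) =o[atTop] fun n => (N n : ℝ)) :
    Tendsto (fun n : ℕ => (n : ℝ) * blockDensity K (N n) n ^ d) atTop atTop := by
  have ratio := tendsto_div_atTop_of_isLittleO
    ((eventually_gt_atTop 0).mono fun n hn => by positivity)
    (Eventually.of_forall fun n => (N n).cast_nonneg) hN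
  have power := (tendsto_rpow_atTop hd).comp (ratio.atTop_div_const (Nat.cast_pos.2 hK))
  refine tendsto_atTop_mono' _ ?_ power
  filter_upwards [hKN, eventually_ge_atTop 2] with n hKn hn
  have n_pos : (0 : ℝ) < n := by positivity
  calc ((N n : ℝ) / (n : ℝ) ^ (2 - 1 / d) / K) ^ d
      = ((n : ℝ) ^ (1 / d) * (N n / (K * (n : ℝ) ^ 2))) ^ d := by
        rw [Real.rpow_sub n_pos, Real.rpow_two]
        congr 1
        field_simp
    _ = n * (N n / (K * (n : ℝ) ^ 2)) ^ d := by
        rw [Real.mul_rpow (by positivity) (by positivity), ← Real.rpow_mul n_pos.le,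
          one_div_mul_cancel hd.ne', Real.rpow_one]
    _ ≤ n * blockDensity K (N n) n ^ d :=
        mul_le_mul_of_nonneg_left (Real.rpow_le_rpow (by positivity)
          (div_le_blockDensity hK hKn hn) hd.le) n_pos.le

end Asymptotics

section OnlineGame

variable {α : Type} {F : SimpleGraph α} {r : ℕ} {d : ℝ}

lemma half_le_of_builderWinsOn {A : Type} [Finite A] (hF : F.edgeSet.Nonempty) (hr : 0 < r)
    (hwin : BuilderWinsOn F r d A) : 1 / 2 ≤ d := by
  obtain ⟨l, ⟨-, not_diag⟩, hdens, c, g, hg⟩ := hwin fun _ _ => ⟨0, hr⟩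
  obtain ⟨⟨u, v⟩, huv⟩ := hF
  obtain ⟨hmem, hne⟩ := (fromEdgeSet_adj _).1 (hg u v huv)
  have presented : s(g u, g v) ∈ l := by
    rw [← map_fst_runPainter (fun _ _ => ⟨0, hr⟩ : PainterStrategy A r) l]
    exact List.mem_map_of_mem (f := Prod.fst) hmem
  have one_le : 1 ≤ edgesWithin (boardOf l) ({g u, g v} : Finset A) := by
    refine (Set.ncard_pos (Set.toFinite _)).2 ⟨s(g u, g v), ?_, by simp⟩
    rw [boardOf, edgeSet_fromEdgeSet]
    exact ⟨presented, not_diag _ presented⟩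
  have bound := hdens l.length {g u, g v} (Finset.insert_nonempty _ _)
  rw [List.take_length, Finset.card_pair hne] at bound
  have one_le_real : (1 : ℝ) ≤ edgesWithin (boardOf l) ({g u, g v} : Finset A) := by
    exact_mod_cast one_le
  push_cast at bound one_le_real
  linarith

lemma one_sub_failureConstant_div_le_onlineProb {a n K M : ℕ} (hr : 0 < r)
    (hwin : BuilderWinsOn F r d (Fin a)) (hK : Fintype.card (Edge (Fin a)) ≤ K) (hK0 : 0 < K)
    (hKM : K ≤ M) (hM : M ≤ n.choose 2) (han : 2 * a ≤ n)
    (hd : 1 ≤ n * blockDensity K M n ^ d) (π : PainterStrategy (Fin n) r) :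
    1 - failureConstant (Fin a) r K d ((1 / 2) ^ a) /
        (n * blockDensity K M n ^ d) ≤
      onlineProb n M (OnlineMonoCopy F π) := by
  have choose_pos : 0 < n.choose 2 := hK0.trans_le (hKM.trans hM)
  have : Nonempty (Edge (Fin n)) := by
    rwa [← Fintype.card_pos_iff, card_edge, Fintype.card_fin]
  have block_pos : 0 < M / K := Nat.div_pos hKM hK0
  have p_pos : 0 < blockDensity K M n := by
    rw [blockDensity]
    positivity
  have p_le_one : blockDensity K M n ≤ 1 :=
    div_le_one_of_le₀ (by exact_mod_cast (Nat.div_le_self M K).trans hM) (Nat.cast_nonneg _)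
  have simulation := one_sub_failureConstant_div_le π (m := M / K) hr hwin hK
    (by rw [card_edge, Fintype.card_fin, blockDensity]) p_pos p_le_one (by simpa using hd)
    (ε := (1 / 2) ^ a) (by positivity)
    (by simpa using half_pow_mul_pow_le_descFactorial han)
  rw [Fintype.card_fin] at simulation
  exact simulation.trans (drawAverage_le_onlineProb F π (Nat.mul_div_le M K) hM)

end OnlineGame

theorem statement0_general {α : Type} (F : SimpleGraph α) (hF : F.edgeSet.Nonempty)
    (r : ℕ) (d : ℝ) (hBuilder : BuilderWinsDensity F r d) (N : ℕ → ℕ)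
    (hN : (fun n : ℕ => (n : ℝ) ^ ((2 : ℝ) - 1 / d)) =o[atTop] (fun n : ℕ => (N n : ℝ)))
    (hNle : ∀ n : ℕ, N n ≤ n * (n - 1) / 2)
    (π : (n : ℕ) → PainterStrategy (Fin n) r) :
    Tendsto (fun n : ℕ => onlineProb n (N n) (OnlineMonoCopy F (π n))) atTop (nhds 1) := by
  have hr : 0 < r := (π 1 [] s(0, 0)).pos
  obtain ⟨a, hwin : BuilderWinsOn F r d (Fin a)⟩ := hBuilder
  have hd : 1 / 2 ≤ d := half_le_of_builderWinsOn hF hr hwin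
  have hs : 0 ≤ 2 - 1 / d := by
    rw [sub_nonneg, div_le_iff₀ (by linarith)]
    linarith
  let K := Fintype.card (Edge (Fin a)) + 1
  have hKN := eventually_le_of_rpow_isLittleO hs hN K
  have hΛ := tendsto_mul_blockDensity_rpow (by linarith) (Nat.succ_pos _) hKN hN
  have lower := (hΛ.const_div_atTop (failureConstant (Fin a) r K d ((1 / 2) ^ a))).const_sub 1
  rw [sub_zero] at lower
  refine tendsto_of_tendsto_of_tendsto_of_le_of_le' lower tendsto_const_nhds ?_
    (Eventually.of_forall fun n => onlineProb_le_one _ _ _)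
  filter_upwards [hKN, hΛ.eventually_ge_atTop 1, eventually_ge_atTop (2 * a)]
    with n hKn hΛn han
  exact one_sub_failureConstant_div_le_onlineProb hr hwin (Nat.le_succ _) (Nat.succ_pos _) hKn
    (Nat.choose_two_right n ▸ hNle n) han hΛn (π n)

/-- Theorem 4 of the paper. If Builder has a winning strategy in the
deterministic `F`-avoidance game with `r ≥ 2` colors and density restriction `d > 0`, then
for every `N : ℕ → ℕ` with `n^(2-1/d) = o(N(n))` and `N(n) ≤ n(n-1)/2`, and every sequence
of online Painter strategies, a.a.s. the board after `N(n)` steps contains a monochromatic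
copy of `F`. -/
theorem statement0 {α : Type} [Fintype α] (F : SimpleGraph α) (hF : F.edgeSet.Nonempty)
    (r : ℕ) (hr : 2 ≤ r) (d : ℝ) (hd : 0 < d)
    (hBuilder : BuilderWinsDensity F r d)
    (N : ℕ → ℕ)
    (hN : (fun n : ℕ => (n : ℝ) ^ ((2 : ℝ) - 1 / d)) =o[atTop] (fun n : ℕ => (N n : ℝ)))
    (hNle : ∀ n : ℕ, N n ≤ n * (n - 1) / 2)
    (π : (n : ℕ) → PainterStrategy (Fin n) r) :
    Tendsto (fun n : ℕ => onlineProb n (N n) (OnlineMonoCopy F (π n)))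
      atTop (nhds 1) := by
  exact statement0_general F hF r d hBuilder N hN hNle π
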